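/- Let V be a set of n vertices and 1 ≤ p ≤ n-2 an integer. There exists a family Q of subsets of V of size O(p^3 · log(n/p)) such that for every pair of distinct vertices u, v ∈ V and every p-element subset W ⊆ V \ {u,v}, there is a set Q_i ∈ Q with u, v ∈ Q_i and W ∩ Q_i = ∅. Concretely, such a family exists of size at most ⌈e·p·(p+1)^2·ln(n^{2/p}·e·(n-2)/p)⌉. -/

import Mathlib

/-!
Put every vertex into a random set independently with probability `1 / (p + 1)`. The random set
contains `r` given vertices and misses `p` others with probability at least
`q = e⁻¹ * (p + 1)⁻¹ ^ r`, so `k` independent copies all fail to do so with probability at most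
`exp (-k * q)`. There are fewer than `A ^ p` requirements, where `A` is the argument of the
logarithm in the bound on the family, and `A ^ p ≤ exp (k * q)` once `k ≥ p * log A / q`. By the
union bound, some choice of the `k` sets meets every requirement.
-/

section Probability

open MeasureTheory ProbabilityTheory Measure unitInterval
open scoped Finset

variable {α Ω : Type*} [MeasurableSpace Ω] {μ : Measure Ω} [IsProbabilityMeasure μ]

theorem exists_forall_exists_mem_of_sum_pow_lt_one {ι : Type*} [Fintype ι] {S : Finset α}
    {E : α → Set Ω} (h : ∑ a ∈ S, μ.real (E a)ᶜ ^ Fintype.card ι < 1) :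
    ∃ ω : ι → Ω, ∀ a ∈ S, ∃ i, ω i ∈ E a := by
  let ν : Measure (ι → Ω) := Measure.pi fun _ ↦ μ
  let allMiss (a : α) : Set (ι → Ω) := Set.univ.pi fun _ ↦ (E a)ᶜ
  have allMiss_real (a : α) : ν.real (allMiss a) = μ.real (E a)ᶜ ^ Fintype.card ι := by
    simp [ν, allMiss, measureReal_def, pi_pi]
  have union_lt : ν.real (⋃ a ∈ S, allMiss a) < 1 :=
    (measureReal_biUnion_finset_le S allMiss).trans_lt (by simpa only [allMiss_real] using h)
  have union_ne : ⋃ a ∈ S, allMiss a ≠ Set.univ := fun h_univ ↦ by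
    simp [h_univ] at union_lt
  obtain ⟨ω, hω⟩ := (Set.ne_univ_iff_exists_notMem _).1 union_ne
  exact ⟨ω, by simpa [allMiss] using hω⟩

theorem exists_forall_exists_mem_of_card_lt_exp {S : Finset α} {E : α → Set Ω} {q : ℝ} {k : ℕ}
    (hE : ∀ a ∈ S, MeasurableSet (E a)) (hq : ∀ a ∈ S, q ≤ μ.real (E a))
    (hS : #S < Real.exp (k * q)) :
    ∃ ω : Fin k → Ω, ∀ a ∈ S, ∃ i, ω i ∈ E a := by
  refine exists_forall_exists_mem_of_sum_pow_lt_one (μ := μ) ?_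
  have compl_le (a : α) (ha : a ∈ S) : μ.real (E a)ᶜ ≤ Real.exp (-q) := by
    rw [probReal_compl_eq_one_sub (hE a ha)]
    linarith [hq a ha, Real.one_sub_le_exp_neg q]
  calc ∑ a ∈ S, μ.real (E a)ᶜ ^ Fintype.card (Fin k)
      ≤ ∑ _a ∈ S, Real.exp (-q) ^ k := by
        rw [Fintype.card_fin]
        gcongr with a ha
        exact compl_le a ha
    _ = #S / Real.exp (k * q) := by
        rw [Finset.sum_const, nsmul_eq_mul, ← Real.exp_nat_mul, mul_neg, Real.exp_neg,
          div_eq_mul_inv]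
    _ < 1 := (div_lt_one (Real.exp_pos _)).2 hS

variable {V : Type*} {u : Set V} {A B : Finset V}

theorem setBernoulli_real_subset_and_disjoint (x : I) (hA : ↑A ⊆ u) (hB : ↑B ⊆ u)
    (hAB : Disjoint A B) :
    setBer(u, x).real {s | ↑A ⊆ s ∧ Disjoint ↑B s} = x ^ #A * (1 - x : ℝ) ^ #B := by
  classical
  have notMem_A : ∀ i ∈ B, i ∉ A := fun _ hi ↦ Finset.disjoint_right.1 hAB hi
  have preimage_eq : (fun P : V → Prop ↦ {i | P i}) ⁻¹' {s | ↑A ⊆ s ∧ Disjoint ↑B s} =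
      Set.pi (A ∪ B : Finset V) fun i ↦ {i ∈ A} := by
    ext P
    simp only [Set.mem_preimage, Set.mem_ofPred_eq, Set.mem_pi, Set.subset_def, Set.disjoint_left,
      Finset.mem_coe, Finset.mem_union, Set.mem_singleton_iff, eq_iff_iff]
    grind
  let coin (i : V) : Measure Prop :=
    toNNReal x • dirac (i ∈ u) + toNNReal (σ x) • dirac False
  have prod_A : ∏ i ∈ A, coin i {i ∈ A} = toNNReal x ^ #A :=
    Finset.prod_eq_pow_card fun i hi ↦ by
      have i_mem : i ∈ u := hA hi
      simp [coin, hi, i_mem]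
  have prod_B : ∏ i ∈ B, coin i {i ∈ A} = toNNReal (σ x) ^ #B :=
    Finset.prod_eq_pow_card fun i hi ↦ by
      have i_mem : i ∈ u := hB hi
      simp [coin, notMem_A i hi, i_mem]
  rw [measureReal_def, setBernoulli_apply', preimage_eq,
    infinitePi_pi _ (fun i _ ↦ .of_discrete), Finset.prod_union hAB, prod_A, prod_B]
  simp

end Probability

section SeparatingFamily

open ProbabilityTheory unitInterval
open scoped Finset

variable {V : Type*}

/-- The family `𝒬` separates every `r`-set from every disjoint `p`-set: some member contains the
first and misses the second. For `r = 2` this is the notion of a `p`-query scheme. -/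
def IsSeparatingFamily (r p : ℕ) (𝒬 : Finset (Finset V)) : Prop :=
  ∀ A B : Finset V, #A = r → #B = p → Disjoint A B → ∃ Q ∈ 𝒬, A ⊆ Q ∧ Disjoint B Q

theorem IsSeparatingFamily.exists_mem_mem_disjoint {p : ℕ} {𝒬 : Finset (Finset V)}
    (h : IsSeparatingFamily 2 p 𝒬) {u v : V} {W : Finset V} (huv : u ≠ v) (hW : #W = p)
    (hu : u ∉ W) (hv : v ∉ W) : ∃ Q ∈ 𝒬, u ∈ Q ∧ v ∈ Q ∧ Disjoint W Q := by
  classical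
  obtain ⟨Q, hQ, h_sub, h_disj⟩ := h {u, v} W (Finset.card_pair huv) hW (by simp [hu, hv])
  exact ⟨Q, hQ, h_sub (by simp), h_sub (by simp), h_disj⟩

variable [Fintype V]

theorem card_sigma_powersetCard_compl [DecidableEq V] (r p : ℕ) :
    #((Finset.univ.powersetCard r).sigma fun A : Finset V ↦ Aᶜ.powersetCard p) =
      (Fintype.card V).choose r * (Fintype.card V - r).choose p := by
  rw [Finset.card_sigma, Finset.sum_const_nat (m := (Fintype.card V - r).choose p),
    Finset.card_powersetCard, Finset.card_univ]
  intro A hA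
  rw [Finset.card_powersetCard, Finset.card_compl, Finset.mem_powersetCard_univ.1 hA]

theorem exists_isSeparatingFamily_card_le {r p k : ℕ} (x : I)
    (hk : ((Fintype.card V).choose r * (Fintype.card V - r).choose p : ℝ) <
      Real.exp (k * (x ^ r * (1 - x : ℝ) ^ p))) :
    ∃ 𝒬 : Finset (Finset V), #𝒬 ≤ k ∧ IsSeparatingFamily r p 𝒬 := by
  classical
  let S := (Finset.univ.powersetCard r).sigma fun A : Finset V ↦ Aᶜ.powersetCard p
  have mem_S {A B : Finset V} : ⟨A, B⟩ ∈ S ↔ #A = r ∧ Disjoint A B ∧ #B = p := by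
    simp [S, Finset.mem_powersetCard, Finset.subset_compl_iff_disjoint_left]
  let separates (a : Σ _ : Finset V, Finset V) : Set (Set V) :=
    {s | ↑a.1 ⊆ s ∧ Disjoint ↑a.2 s}
  have le_prob : ∀ a ∈ S, x ^ r * (1 - x : ℝ) ^ p ≤ setBer(Set.univ, x).real (separates a) := by
    rintro ⟨A, B⟩ hAB
    obtain ⟨rfl, h_disj, rfl⟩ := mem_S.1 hAB
    exact (setBernoulli_real_subset_and_disjoint x (Set.subset_univ _) (Set.subset_univ _)
      h_disj).ge
  have card_lt : (#S : ℝ) < Real.exp (k * (x ^ r * (1 - x : ℝ) ^ p)) := by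
    rw [card_sigma_powersetCard_compl]
    exact_mod_cast hk
  obtain ⟨ω, hω⟩ :=
    exists_forall_exists_mem_of_card_lt_exp (fun _ _ ↦ .of_discrete) le_prob card_lt
  refine ⟨Finset.univ.image fun i ↦ (ω i).toFinset, Finset.card_image_le.trans_eq (by simp),
    fun A B hA hB hAB ↦ ?_⟩
  obtain ⟨i, hAi, hBi⟩ := hω ⟨A, B⟩ (mem_S.2 ⟨hA, hAB, hB⟩)
  refine ⟨(ω i).toFinset, Finset.mem_image_of_mem _ (Finset.mem_univ i),
    Set.subset_toFinset.2 hAi, ?_⟩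
  rwa [← Finset.disjoint_coe, Set.coe_toFinset]

end SeparatingFamily

section Estimates

theorem exp_neg_one_le_one_sub_inv_pow (p : ℕ) :
    Real.exp (-1) ≤ (1 - ((p : ℝ) + 1)⁻¹) ^ p := by
  rcases p.eq_zero_or_pos with rfl | hp
  · simp
  have base_eq : 1 - ((p : ℝ) + 1)⁻¹ = (1 + (p : ℝ)⁻¹)⁻¹ := by field_simp; ring
  rw [base_eq, inv_pow, Real.exp_neg]
  gcongr
  exact Real.one_add_inv_pow_le_exp

theorem pow_self_div_factorial_lt_exp {p : ℕ} (hp : p ≠ 0) :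
    (p : ℝ) ^ p / p.factorial < Real.exp p :=
  calc (p : ℝ) ^ p / p.factorial
      < ∑ i ∈ Finset.range (p + 1), (p : ℝ) ^ i / i.factorial :=
        Finset.single_lt_sum (f := fun i ↦ (p : ℝ) ^ i / i.factorial) hp.symm
          (by simp) (by simp) (by simp) fun i _ _ ↦ by positivity
    _ ≤ Real.exp p := Real.sum_le_exp_of_nonneg p.cast_nonneg (p + 1)

theorem choose_lt_exp_one_mul_div_pow {m p : ℕ} (hm : m ≠ 0) (hp : p ≠ 0) :
    (m.choose p : ℝ) < (Real.exp 1 * m / p) ^ p :=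
  calc (m.choose p : ℝ) ≤ (m : ℝ) ^ p / p.factorial := Nat.choose_le_pow_div p m
    _ = (p : ℝ) ^ p / p.factorial * (m / p : ℝ) ^ p := by rw [div_pow]; field_simp
    _ < Real.exp p * (m / p : ℝ) ^ p := by
        gcongr
        exact pow_self_div_factorial_lt_exp hp
    _ = (Real.exp 1 * m / p) ^ p := by
        rw [mul_div_assoc, mul_pow, ← Real.exp_nat_mul, mul_one]

theorem choose_mul_choose_lt_pow {n r p : ℕ} (hp : p ≠ 0) (hrn : r < n) :
    (n.choose r * (n - r).choose p : ℝ) <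
      ((n : ℝ) ^ ((r : ℝ) / p) * Real.exp 1 * (n - r) / p) ^ p := by
  have rpow_pow : ((n : ℝ) ^ ((r : ℝ) / p)) ^ p = (n : ℝ) ^ r := by
    rw [← Real.rpow_mul_natCast n.cast_nonneg, div_mul_cancel₀ _ (by positivity),
      Real.rpow_natCast]
  calc (n.choose r * (n - r).choose p : ℝ)
      ≤ n ^ r * (n - r).choose p := by
        gcongr
        exact_mod_cast Nat.choose_le_pow n r
    _ < n ^ r * (Real.exp 1 * (n - r : ℕ) / p) ^ p := by
        have n_pos : 0 < n := by omega
        gcongr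
        exact choose_lt_exp_one_mul_div_pow (Nat.sub_ne_zero_of_lt hrn) hp
    _ = ((n : ℝ) ^ ((r : ℝ) / p) * Real.exp 1 * (n - r) / p) ^ p := by
        rw [← rpow_pow, ← mul_pow, Nat.cast_sub hrn.le]
        ring

end Estimates

theorem exists_isSeparatingFamily_card_le_ceil {V : Type*} [Fintype V] {r p : ℕ} {A : ℝ}
    (hA : 0 < A)
    (h : ((Fintype.card V).choose r * (Fintype.card V - r).choose p : ℝ) < A ^ p) :
    ∃ 𝒬 : Finset (Finset V),
      𝒬.card ≤ ⌈Real.exp 1 * p * ((p : ℝ) + 1) ^ r * Real.log A⌉₊ ∧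
      IsSeparatingFamily r p 𝒬 := by
  set k : ℕ := ⌈Real.exp 1 * p * ((p : ℝ) + 1) ^ r * Real.log A⌉₊
  let x : unitInterval := ⟨((p : ℝ) + 1)⁻¹, by positivity, inv_le_one_of_one_le₀ (by simp)⟩
  have log_le : p * Real.log A ≤ k * (((p : ℝ) + 1)⁻¹ ^ r * Real.exp (-1)) :=
    calc p * Real.log A
        = Real.exp 1 * p * ((p : ℝ) + 1) ^ r * Real.log A *
            (((p : ℝ) + 1)⁻¹ ^ r * Real.exp (-1)) := by
          rw [Real.exp_neg, inv_pow]
          field_simp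
      _ ≤ k * (((p : ℝ) + 1)⁻¹ ^ r * Real.exp (-1)) := by
          gcongr
          exact Nat.le_ceil _
  refine exists_isSeparatingFamily_card_le x ?_
  calc ((Fintype.card V).choose r * (Fintype.card V - r).choose p : ℝ)
      < A ^ p := h
    _ = Real.exp (p * Real.log A) := by rw [Real.exp_nat_mul, Real.exp_log hA]
    _ ≤ Real.exp (k * (((p : ℝ) + 1)⁻¹ ^ r * Real.exp (-1))) := Real.exp_le_exp.2 log_le
    _ ≤ Real.exp (k * (x ^ r * (1 - x : ℝ) ^ p)) := by
        gcongr
        exact exp_neg_one_le_one_sub_inv_pow p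

theorem stmt_4_general {V : Type*} [Fintype V] (n r p : ℕ)
    (hn : Fintype.card V = n) (hp : 1 ≤ p) (hrn : r < n) :
    ∃ 𝒬 : Finset (Finset V),
      𝒬.card ≤ ⌈Real.exp 1 * p * ((p : ℝ) + 1) ^ r *
          Real.log ((n : ℝ) ^ ((r : ℝ) / p) * Real.exp 1 * ((n : ℝ) - r) / p)⌉₊ ∧
      IsSeparatingFamily r p 𝒬 := by
  subst hn
  have card_pos : (0 : ℝ) < Fintype.card V := by exact_mod_cast hrn.pos
  have card_sub_pos : (0 : ℝ) < Fintype.card V - r := sub_pos.2 (by exact_mod_cast hrn)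
  exact exists_isSeparatingFamily_card_le_ceil (by positivity)
    (choose_mul_choose_lt_pow (by omega) hrn)

/-- Existence of a `p`-Query-Scheme of size at most
`⌈e·p·(p+1)²·ln(n^{2/p}·e·(n-2)/p)⌉`: a family `𝒬` of subsets of an
`n`-element vertex set such that for every pair of distinct vertices `u, v`
and every `p`-element set `W` disjoint from `{u, v}`, some `Q ∈ 𝒬` contains
`u` and `v` and avoids `W`. -/
theorem stmt_4 {V : Type*} [Fintype V] [DecidableEq V] (n p : ℕ)
    (hn : Fintype.card V = n) (hp : 1 ≤ p) (hpn : p ≤ n - 2) :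
    ∃ 𝒬 : Finset (Finset V),
      𝒬.card ≤ ⌈Real.exp 1 * p * ((p : ℝ) + 1) ^ 2 *
          Real.log ((n : ℝ) ^ ((2 : ℝ) / p) * Real.exp 1 * ((n : ℝ) - 2) / p)⌉₊ ∧
      ∀ u v : V, u ≠ v → ∀ W : Finset V, W.card = p → u ∉ W → v ∉ W →
        ∃ Q ∈ 𝒬, u ∈ Q ∧ v ∈ Q ∧ Disjoint W Q := by
  obtain ⟨𝒬, h_card, h_sep⟩ := stmt_4_general n 2 p hn hp (by omega)
  refine ⟨𝒬, by simpa only [Nat.cast_ofNat] using h_card, fun u v huv W hW hu hv ↦ ?_⟩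
  exact h_sep.exists_mem_mem_disjoint huv hW hu hv
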